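/- There is an absolute constant C > 0 such that for every n ≥ 1, every integer k ≥ 2, and every k-decomposable permutation point set X of size n, the set G of points added by GREEDY satisfies |X ∪ G| ≤ C · n · log₂ k (i.e., GREEDY takes O(n log k) time on k-decomposable sequences). -/

import Mathlib

open Finset

attribute [local instance] Classical.propDecidable

/-- A point in the plane: first coordinate is the key, second is the time. -/
abbrev Pt : Type := ℤ × ℤ

/-- `r` lies in the closed axis-parallel rectangle with opposite corners `p` and `q`. -/
def inRect (p q r : Pt) : Prop :=
  min p.1 q.1 ≤ r.1 ∧ r.1 ≤ max p.1 q.1 ∧ min p.2 q.2 ≤ r.2 ∧ r.2 ≤ max p.2 q.2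

/-- `r` lies in the open axis-parallel rectangle with opposite corners `p` and `q`. -/
def inOpenRect (p q r : Pt) : Prop :=
  min p.1 q.1 < r.1 ∧ r.1 < max p.1 q.1 ∧ min p.2 q.2 < r.2 ∧ r.2 < max p.2 q.2

/-- `S` is an arborally satisfied set. -/
def ArbSat (S : Finset Pt) : Prop :=
  ∀ p ∈ S, ∀ q ∈ S, p.1 = q.1 ∨ p.2 = q.2 ∨ ∃ r ∈ S, r ≠ p ∧ r ≠ q ∧ inRect p q r

/-- `X` is the permutation point set `{(σ(t), t) : 1 ≤ t ≤ n}` of some permutation `σ` of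
`{1, …, n}`. -/
def IsPermPointSet (n : ℕ) (X : Finset Pt) : Prop :=
  ∃ σ : Equiv.Perm (Fin n),
    X = Finset.univ.image (fun t : Fin n => ((((σ t : ℕ) : ℤ) + 1, ((t : ℕ) : ℤ) + 1) : Pt))

/-- The points added by GREEDY at time `t`, given the point set `X` and the set `G` of points
added before time `t`: for the point `p` of `X` with time `t` and each point `q` of time `< t`
with a different key such that the rectangle spanned by `p` and `q` contains no other point of
time `< t`, the point `(key q, t)` is added. -/
noncomputable def greedyStep (X G : Finset Pt) (t : ℤ) : Finset Pt :=
  (X.filter (fun p => p.2 = t)).biUnion (fun p =>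
    (((X ∪ G).filter (fun s => s.2 < t)).filter (fun q =>
      q.1 ≠ p.1 ∧ ∀ r ∈ (X ∪ G).filter (fun s => s.2 < t), inRect p q r → r = q)).image
      (fun q => ((q.1, t) : Pt)))

/-- All points added by GREEDY while processing times `1, …, t`. -/
noncomputable def greedyUpTo (X : Finset Pt) : ℕ → Finset Pt
  | 0 => ∅
  | t + 1 => greedyUpTo X t ∪ greedyStep X (greedyUpTo X t) ((t : ℤ) + 1)

/-- The set `G` of points added by GREEDY over the whole execution on a permutation point set
`X` of size `n`. -/
noncomputable def greedyG (n : ℕ) (X : Finset Pt) : Finset Pt := greedyUpTo X n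

/-- `OP r` is the point of `X` processed at the time at which `r` was added; for `r ∈ X`,
`OP r = r`. -/
noncomputable def OP (X : Finset Pt) (r : Pt) : Pt :=
  ((X.filter (fun p => p.2 = r.2)).toList).headI

/-- The first point of `S` above `p`: the point of `S` with the same key as `p`, smaller time,
and the largest such time. -/
noncomputable def firstAbove (S : Finset Pt) (p : Pt) : Pt :=
  (p.1, (((S.filter (fun q => q.1 = p.1 ∧ q.2 < p.2)).image Prod.snd).max).unbotD 0)

/-- The pair `CP(p) = (OP(p), OP(q))` where `q` is the first point of `X ∪ G` above `p`. -/
noncomputable def CP (X G : Finset Pt) (p : Pt) : Pt × Pt :=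
  (OP X p, OP X (firstAbove (X ∪ G) p))

/-- `CP(p) ∈ MMC` (*zig*). -/
def inMMC (X G : Finset Pt) (p : Pt) : Prop :=
  ((CP X G p).1.1 < p.1 ∧ (CP X G p).2.1 < (CP X G p).1.1 ∧ (CP X G p).2.2 < (CP X G p).1.2)
  ∨ (p.1 < (CP X G p).1.1 ∧ (CP X G p).1.1 < (CP X G p).2.1 ∧ (CP X G p).2.2 < (CP X G p).1.2)

/-- `CP(p) ∈ MFC` (*zag*). -/
def inMFC (X G : Finset Pt) (p : Pt) : Prop :=
  ((CP X G p).1.1 < p.1 ∧ p.1 ≤ (CP X G p).2.1 ∧ (CP X G p).2.2 < p.2)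
  ∨ (p.1 < (CP X G p).1.1 ∧ (CP X G p).2.1 ≤ p.1 ∧ (CP X G p).2.2 < p.2)

/-- A pair is good if no point of `X` lies in the open rectangle spanned by it. -/
def IsGoodPair (X : Finset Pt) (pr : Pt × Pt) : Prop :=
  ∀ r ∈ X, ¬ inOpenRect pr.1 pr.2 r

/-- `B` is a block of `X`: the set of points of `X` whose times lie in some interval, whose
keys form a set of consecutive integers; blocks are nonempty. -/
def IsBlock (X B : Finset Pt) : Prop :=
  B.Nonempty ∧ (∃ i j : ℤ, B = X.filter (fun p => i ≤ p.2 ∧ p.2 ≤ j)) ∧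
    ∃ c d : ℤ, B.image Prod.fst = Finset.Icc c d

/-- `Top(B)`: the point of `B` with the smallest time. -/
noncomputable def TopPt (B : Finset Pt) : Pt :=
  ((B.filter (fun p => ∀ q ∈ B, p.2 ≤ q.2)).toList).headI

/-- A decomposition tree of `X`: a rooted tree whose nodes are blocks of `X`, whose root is
`X`, whose leaves are exactly the singleton blocks, and in which the children of every
internal node partition it. -/
structure DecompTree (X : Finset Pt) where
  nodes : Finset (Finset Pt)
  parent : Finset Pt → Finset Pt
  isBlock_nodes : ∀ B ∈ nodes, IsBlock X B
  root_mem : X ∈ nodes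
  parent_mem : ∀ B ∈ nodes, B ≠ X → parent B ∈ nodes
  ssubset_parent : ∀ B ∈ nodes, B ≠ X → B ⊂ parent B
  leaf_iff : ∀ B ∈ nodes, (¬ ∃ C ∈ nodes, C ≠ X ∧ parent C = B) ↔ B.card = 1
  children_partition : ∀ B ∈ nodes, B.card ≠ 1 →
    ∀ x ∈ B, ∃! C, C ∈ nodes ∧ C ≠ X ∧ parent C = B ∧ x ∈ C

/-- The children of a node `B` in a decomposition tree. -/
noncomputable def DecompTree.children {X : Finset Pt} (T : DecompTree X) (B : Finset Pt) :
    Finset (Finset Pt) :=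
  T.nodes.filter (fun C => C ≠ X ∧ T.parent C = B)

/-- `X` is `k`-decomposable: it admits a decomposition tree in which every node has at most
`k` children. -/
def kDecomposable (k : ℕ) (X : Finset Pt) : Prop :=
  ∃ T : DecompTree X, ∀ B ∈ T.nodes, (T.children B).card ≤ k

/-- `RT(p)`: the node of the decomposition tree closest to the root (i.e. containing all
others) among the nodes `B` with `Top(B) = p`. -/
noncomputable def RT {X : Finset Pt} (T : DecompTree X) (p : Pt) : Finset Pt :=
  (((T.nodes.filter (fun B => TopPt B = p)).filter
      (fun B => ∀ C ∈ T.nodes, TopPt C = p → C ⊆ B)).toList).headI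

/-- The points added by GREEDY (`G`) while processing `Top(B)` that lie to the left of
`Top(B)`. -/
noncomputable def leftSet (G B : Finset Pt) : Finset Pt :=
  G.filter (fun s => s.2 = (TopPt B).2 ∧ s.1 < (TopPt B).1)

/-- `Left(B)`: among the points added by GREEDY while processing `Top(B)` with key less than
`key (Top B)`, the one with the largest key (junk if none exists). -/
noncomputable def leftPt (G B : Finset Pt) : Pt :=
  (((leftSet G B).filter (fun s => ∀ r ∈ leftSet G B, r.1 ≤ s.1)).toList).headI

/-- The points added by GREEDY (`G`) while processing `Top(B)` that lie to the right of
`Top(B)`. -/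
noncomputable def rightSet (G B : Finset Pt) : Finset Pt :=
  G.filter (fun s => s.2 = (TopPt B).2 ∧ (TopPt B).1 < s.1)

/-- `Right(B)`: among the points added by GREEDY while processing `Top(B)` with key greater
than `key (Top B)`, the one with the smallest key (junk if none exists). -/
noncomputable def rightPt (G B : Finset Pt) : Pt :=
  (((rightSet G B).filter (fun s => ∀ r ∈ rightSet G B, s.1 ≤ r.1)).toList).headI

/-! ### An abstract model of the execution of GREEDY -/

/-- The key `x` has been touched before time `t`, and since its last touch no other key of `D`
has been touched. -/
def Exposed (T : ℤ → ℕ → Prop) (D : Set ℤ) (x : ℤ) (t : ℕ) : Prop :=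
  ∃ u < t, T x u ∧ ∀ y ∈ D, ∀ u', u ≤ u' → u' < t → T y u' → y = x ∧ u' = u

/-- The relation `T x t` ("key `x` is touched at time `t`") describes the execution of GREEDY
on the sequence of pairwise distinct keys `s 0, …, s (n - 1)`. -/
structure GreedyRun (n : ℕ) (s : ℕ → ℤ) (T : ℤ → ℕ → Prop) : Prop where
  inj : ∀ t < n, ∀ t' < n, s t = s t' → t = t'
  touch_iff : ∀ x t, T x t ↔ t < n ∧ (x = s t ∨ Exposed T (Set.uIcc (s t) x) x t)

/-- The keys touched at time `t`. -/
noncomputable def touched (n : ℕ) (s : ℕ → ℤ) (T : ℤ → ℕ → Prop) (t : ℕ) : Finset ℤ :=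
  ((range n).image s).filter (fun x => T x t)

/-- The keys of `R` that can be seen from the left end or from the right end of `R` just before
time `t`. -/
noncomputable def visible (n : ℕ) (s : ℕ → ℤ) (T : ℤ → ℕ → Prop) (R : Set ℤ) (t : ℕ) :
    Finset ℤ :=
  ((range n).image s).filter
    (fun x => x ∈ R ∧ (Exposed T (R ∩ Set.Iic x) x t ∨ Exposed T (R ∩ Set.Ici x) x t))

/-- The keys in `[a, b]` are exactly those accessed at the times in `[i, e)`. -/
structure IsTimeBlock (n : ℕ) (s : ℕ → ℤ) (i e : ℕ) (a b : ℤ) : Prop where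
  lt : i < e
  le : e ≤ n
  mem_iff : ∀ t < n, s t ∈ Set.Icc a b ↔ i ≤ t ∧ t < e

section Model

variable {n : ℕ} {s : ℕ → ℤ} {T : ℤ → ℕ → Prop}

theorem Exposed.mono {D D' : Set ℤ} {x : ℤ} {t : ℕ} (h : Exposed T D x t) (hD : D' ⊆ D) :
    Exposed T D' x t := by
  obtain ⟨u, hu, hx, h⟩ := h
  exact ⟨u, hu, hx, fun y hy => h y (hD hy)⟩

theorem Exposed.congr {D : Set ℤ} {x : ℤ} {t : ℕ} (h : Exposed T D x (t + 1)) (hx : ¬ T x t) :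
    Exposed T D x t := by
  obtain ⟨u, hu, hxu, h⟩ := h
  have : u ≠ t := by rintro rfl; exact hx hxu
  exact ⟨u, by omega, hxu, fun y hy u' h1 h2 => h y hy u' h1 (by omega)⟩

theorem Exposed.eq_of_touch {D : Set ℤ} {x y : ℤ} {t : ℕ} (h : Exposed T D x (t + 1))
    (hy : y ∈ D) (hyt : T y t) : y = x := by
  obtain ⟨u, hu, hxu, h⟩ := h
  exact (h y hy t (by omega) (by omega) hyt).1

theorem mem_visible {R : Set ℤ} {t : ℕ} {x : ℤ} : x ∈ visible n s T R t ↔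
    x ∈ (range n).image s ∧ x ∈ R ∧
      (Exposed T (R ∩ Set.Iic x) x t ∨ Exposed T (R ∩ Set.Ici x) x t) := by
  simp only [visible, Finset.mem_filter]

namespace GreedyRun

theorem touch_self (hT : GreedyRun n s T) {t : ℕ} (h : t < n) : T (s t) t :=
  (hT.touch_iff _ t).2 ⟨h, Or.inl rfl⟩

theorem exists_access_le (hT : GreedyRun n s T) {x : ℤ} {t : ℕ} (h : T x t) :
    ∃ u ≤ t, u < n ∧ s u = x := by
  induction t using Nat.strong_induction_on with
  | _ t ih =>
    obtain ⟨htn, h | ⟨u, hu, hxu, -⟩⟩ := (hT.touch_iff x t).1 h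
    · exact ⟨t, le_rfl, htn, h.symm⟩
    · obtain ⟨v, hv, h1, h2⟩ := ih u hu hxu
      exact ⟨v, by omega, h1, h2⟩

theorem mem_touched (hT : GreedyRun n s T) {x : ℤ} {t : ℕ} : x ∈ touched n s T t ↔ T x t := by
  simp only [touched, Finset.mem_filter, Finset.mem_image, Finset.mem_range,
    and_iff_right_iff_imp]
  intro h
  obtain ⟨u, -, h1, h2⟩ := hT.exists_access_le h
  exact ⟨u, h1, h2⟩

/-- The mirror image of a run of GREEDY. -/
theorem neg (hT : GreedyRun n s T) : GreedyRun n (fun t => - s t) (fun x t => T (-x) t) where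
  inj t ht t' ht' h := hT.inj t ht t' ht' (neg_injective h)
  touch_iff x t := by
    rw [hT.touch_iff]
    have key : Exposed T (Set.uIcc (s t) (-x)) (-x) t ↔
        Exposed (fun x t => T (-x) t) (Set.uIcc (-s t) x) x t := by
      constructor
      · rintro ⟨u, hu, hx, h⟩
        refine ⟨u, hu, hx, fun y hy u' h1 h2 h3 => ?_⟩
        have := h (-y) (by rw [Set.mem_uIcc] at hy ⊢; omega) u' h1 h2 h3
        omega
      · rintro ⟨u, hu, hx, h⟩
        refine ⟨u, hu, hx, fun y hy u' h1 h2 h3 => ?_⟩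
        have := h (-y) (by rw [Set.mem_uIcc] at hy ⊢; omega) u' h1 h2 (by simpa using h3)
        omega
    rw [key, neg_eq_iff_eq_neg]

theorem not_touch_of_block (hT : GreedyRun n s T) {i e : ℕ} {a b x : ℤ} {t : ℕ}
    (hB : IsTimeBlock n s i e a b)
    (hx : x ∈ Set.Icc a b) (ht : t < i) : ¬ T x t := by
  intro h
  obtain ⟨u, h1, h2, rfl⟩ := hT.exists_access_le h
  have := (hB.mem_iff u h2).1 hx
  omega

/-- During a block, after its first access, the only key touched to the left of the block is
its left neighbour. -/
theorem no_touch_between (hT : GreedyRun n s T) {i e : ℕ} {a b x : ℤ} {t : ℕ}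
    (hB : IsTimeBlock n s i e a b)
    (hx : x < a) (hit : i < t) (hte : t < e) (h : T x t) {y : ℤ} (hxy : x < y) (hya : y < a)
    {u : ℕ} (hu : u < i) : ¬ T y u := by
  induction t using Nat.strong_induction_on with
  | _ t ih =>
    intro hyu
    have hsi := (hB.mem_iff i (by have := hB.le; omega)).2 ⟨le_rfl, hB.lt⟩
    have hst := (hB.mem_iff t (by have := hB.le; omega)).2 ⟨hit.le, hte⟩
    rw [Set.mem_Icc] at hsi hst
    obtain ⟨htn, h | ⟨v, hv, hxv, hvis⟩⟩ := (hT.touch_iff x t).1 h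
    · omega
    by_cases hiv : i < v
    · exact ih v hv hiv (by omega) hxv hyu
    obtain ⟨l, ⟨hl1, hl2, hl3⟩, hlmax⟩ := Int.exists_greatest_of_bdd
      (P := fun z => x < z ∧ z < a ∧ ∃ w < i, T z w) ⟨a, fun z hz => hz.2.1.le⟩
      ⟨y, hxy, hya, u, hu, hyu⟩
    have hli : T l i := by
      refine (hT.touch_iff l i).2 ⟨by omega, Or.inr ?_⟩
      obtain ⟨w, hw, hlw⟩ := hl3
      refine ⟨Nat.findGreatest (fun w => T l w) (i - 1), ?_, ?_, ?_⟩
      · have := Nat.findGreatest_le (P := fun w => T l w) (i - 1)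
        omega
      · exact Nat.findGreatest_spec (P := fun w => T l w) (show w ≤ i - 1 by omega) hlw
      · intro z hz w' h1 h2 h3
        rw [Set.mem_uIcc] at hz
        have hzl : z = l := by
          by_contra hne
          by_cases hza : z < a
          · have := hlmax z ⟨by omega, hza, w', h2, h3⟩
            omega
          · exact hT.not_touch_of_block hB ⟨by omega, by omega⟩ h2 h3
        refine ⟨hzl, le_antisymm ?_ h1⟩
        exact Nat.le_findGreatest (P := fun w => T l w) (by omega) (hzl ▸ h3)
    have := hvis l (by rw [Set.mem_uIcc]; omega) i (by omega) hit hli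
    omega

theorem eq_of_touch_left (hT : GreedyRun n s T) {i e : ℕ} {a b x y : ℤ} {t t' : ℕ}
    (hB : IsTimeBlock n s i e a b)
    (hx : x < a) (hit : i < t) (hte : t < e) (h : T x t)
    (hy : y < a) (hit' : i < t') (hte' : t' < e) (h' : T y t') : x = y := by
  have early : ∀ {z : ℤ} {v : ℕ}, z < a → v < e → T z v → ∃ u < i, T z u := by
    intro z v hz hv hzv
    obtain ⟨u, h1, h2, rfl⟩ := hT.exists_access_le hzv
    refine ⟨u, ?_, hT.touch_self h2⟩
    by_contra hui
    have := (hB.mem_iff u h2).2 ⟨by omega, by omega⟩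
    rw [Set.mem_Icc] at this
    omega
  rcases lt_trichotomy x y with hxy | hxy | hxy
  · obtain ⟨u, hu, hyu⟩ := early hy hte' h'
    exact absurd hyu (hT.no_touch_between hB hx hit hte h hxy hy hu)
  · exact hxy
  · obtain ⟨u, hu, hyu⟩ := early hx hte h
    exact absurd hyu (hT.no_touch_between hB hy hit' hte' h' hxy hx hu)

theorem _root_.IsTimeBlock.neg {i e : ℕ} {a b : ℤ} (hB : IsTimeBlock n s i e a b) :
    IsTimeBlock n (fun t => - s t) i e (-b) (-a) where
  lt := hB.lt
  le := hB.le
  mem_iff t ht := by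
    rw [← hB.mem_iff t ht, Set.mem_Icc, Set.mem_Icc]
    omega

theorem eq_of_touch_right (hT : GreedyRun n s T) {i e : ℕ} {a b x y : ℤ} {t t' : ℕ}
    (hB : IsTimeBlock n s i e a b)
    (hx : b < x) (hit : i < t) (hte : t < e) (h : T x t)
    (hy : b < y) (hit' : i < t') (hte' : t' < e) (h' : T y t') : x = y := by
  have := hT.neg.eq_of_touch_left hB.neg (x := -x) (y := -y) (t := t) (t' := t') (by omega) hit
    hte (by simpa using h) (by omega) hit' hte' (by simpa using h')
  omega

/-- Every access of a block other than its first one touches at most two keys outside. -/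
theorem card_touched_outside_le (hT : GreedyRun n s T) {i e : ℕ} {a b : ℤ} {t : ℕ}
    (hB : IsTimeBlock n s i e a b)
    (hit : i < t) (hte : t < e) :
    ((touched n s T t).filter (fun x => x ∉ Set.Icc a b)).card ≤ 2 := by
  have hsub : (touched n s T t).filter (fun x => x ∉ Set.Icc a b) ⊆
      (touched n s T t).filter (fun x => x < a) ∪ (touched n s T t).filter (fun x => b < x) := by
    intro x
    simp only [Finset.mem_filter, Finset.mem_union, Set.mem_Icc]
    rintro ⟨h1, h2⟩
    simp only [h1, true_and]
    omega
  refine (card_le_card hsub).trans ((card_union_le _ _).trans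
    (Nat.add_le_add (b := 1) (d := 1) ?_ ?_))
  · refine card_le_one.2 fun x hx y hy => ?_
    rw [Finset.mem_filter, hT.mem_touched] at hx hy
    exact hT.eq_of_touch_left hB hx.2 hit hte hx.1 hy.2 hit hte hy.1
  · refine card_le_one.2 fun x hx y hy => ?_
    rw [Finset.mem_filter, hT.mem_touched] at hx hy
    exact hT.eq_of_touch_right hB hx.2 hit hte hx.1 hy.2 hit hte hy.1

/-- A key of `R` touched by an access outside `R` was visible. -/
theorem mem_visible_of_touch (hT : GreedyRun n s T) {R : Set ℤ} (hR : R.OrdConnected) {t : ℕ}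
    (hst : s t ∉ R) {x : ℤ} (hxR : x ∈ R) (hx : T x t) : x ∈ visible n s T R t := by
  refine mem_visible.2 ⟨(Finset.mem_filter.1 (hT.mem_touched.2 hx)).1, hxR, ?_⟩
  obtain ⟨htn, rfl | h⟩ := (hT.touch_iff x t).1 hx
  · exact absurd hxR hst
  rcases le_total (s t) x with hsx | hsx
  · refine Or.inl (h.mono ?_)
    rintro y ⟨hyR, hyx⟩
    refine Set.mem_uIcc.2 (Or.inl ⟨?_, hyx⟩)
    by_contra hys
    exact hst (hR.out hyR hxR ⟨by omega, hsx⟩)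
  · refine Or.inr (h.mono ?_)
    rintro y ⟨hyR, hyx⟩
    refine Set.mem_uIcc.2 (Or.inr ⟨hyx, ?_⟩)
    by_contra hys
    exact hst (hR.out hxR hyR ⟨hsx, by omega⟩)

theorem visible_succ_subset (hT : GreedyRun n s T) {R : Set ℤ} (hR : R.OrdConnected) {t : ℕ}
    (hst : s t ∉ R) : visible n s T R (t + 1) ⊆ visible n s T R t := by
  intro x hx
  obtain ⟨hxU, hxR, hv⟩ := mem_visible.1 hx
  by_cases hxt : T x t
  · exact hT.mem_visible_of_touch hR hst hxR hxt
  · exact mem_visible.2 ⟨hxU, hxR, hv.imp (fun h => h.congr hxt) (fun h => h.congr hxt)⟩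

theorem visible_subset_of_le (hT : GreedyRun n s T) {R : Set ℤ} (hR : R.OrdConnected) {t t' : ℕ}
    (htt : t ≤ t') (hst : ∀ u, t ≤ u → u < t' → s u ∉ R) :
    visible n s T R t' ⊆ visible n s T R t := by
  induction t', htt using Nat.le_induction with
  | base => exact subset_rfl
  | succ m hm ih =>
    exact (hT.visible_succ_subset hR (hst m hm (by omega))).trans
      (ih fun u h1 h2 => hst u h1 (by omega))

/-- Amortized bound for the number of colours of `R` touched by an access outside `R`. -/
theorem card_image_touched_add_le (hT : GreedyRun n s T) {α : Type*} [LinearOrder α]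
    [DecidableEq α] {col : ℤ → α} (hcol : Monotone col) {R : Set ℤ} (hR : R.OrdConnected) {t : ℕ}
    (hst : s t ∉ R) :
    (((touched n s T t).filter (· ∈ R)).image col).card
      + ((visible n s T R (t + 1)).image col).card
      ≤ ((visible n s T R t).image col).card + 2 := by
  set S := (touched n s T t).filter (· ∈ R) with hS
  have hmem : ∀ x, x ∈ S ↔ T x t ∧ x ∈ R := fun x => by
    rw [hS, Finset.mem_filter, hT.mem_touched]
  have hunion : S.image col ∪ (visible n s T R (t + 1)).image col ⊆
      (visible n s T R t).image col := by
    refine Finset.union_subset (Finset.image_subset_image fun x hx => ?_)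
      (Finset.image_subset_image (hT.visible_succ_subset hR hst))
    obtain ⟨h1, h2⟩ := (hmem x).1 hx
    exact hT.mem_visible_of_touch hR hst h2 h1
  have hinter : (S.image col ∩ (visible n s T R (t + 1)).image col).card ≤ 2 := by
    rcases S.eq_empty_or_nonempty with h0 | h0
    · simp [h0]
    have hmin := (hmem _).1 (S.min'_mem h0)
    have hmax := (hmem _).1 (S.max'_mem h0)
    refine (card_le_card (t := {col (S.min' h0), col (S.max' h0)}) ?_).trans card_le_two
    intro c hc
    rw [Finset.mem_inter, Finset.mem_image, Finset.mem_image] at hc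
    obtain ⟨⟨x, hx, rfl⟩, ⟨y, hy, hxy⟩⟩ := hc
    obtain ⟨-, hyR, hv⟩ := mem_visible.1 hy
    have hx1 := S.min'_le x hx
    have hx2 := S.le_max' x hx
    rw [Finset.mem_insert, Finset.mem_singleton]
    rcases hv with hv | hv
    · left
      refine le_antisymm ?_ (hcol hx1)
      rcases le_total (S.min' h0) y with h | h
      · rw [hv.eq_of_touch ⟨hmin.2, h⟩ hmin.1, hxy]
      · rw [← hxy]; exact hcol h
    · right
      refine le_antisymm (hcol hx2) ?_
      rcases le_total (S.max' h0) y with h | h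
      · rw [← hxy]; exact hcol h
      · rw [hv.eq_of_touch ⟨hmax.2, h⟩ hmax.1, hxy]
  have := card_union_add_card_inter (S.image col) ((visible n s T R (t + 1)).image col)
  have := card_le_card hunion
  omega

/-- Processing a block of a single colour inside `R` creates at most five visible colours. -/
theorem card_image_visible_block_le (hT : GreedyRun n s T) {α : Type*} [DecidableEq α]
    {col : ℤ → α} {R : Set ℤ} {i e : ℕ} {a b : ℤ}
   
    (hB : IsTimeBlock n s i e a b)
    (hcol : ∀ x ∈ Set.Icc a b, ∀ y ∈ Set.Icc a b, col x = col y) :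
    ((visible n s T R e).image col).card ≤ ((visible n s T R i).image col).card + 5 := by
  set U := (range n).image s
  set Zl := U.filter (fun x => x ∈ R ∧ T x i ∧ ∀ y ∈ R, y ≤ x → T y i → y = x) with hZl
  set Zr := U.filter (fun x => x ∈ R ∧ T x i ∧ ∀ y ∈ R, x ≤ y → T y i → y = x) with hZr
  set Za := U.filter (fun x => x < a ∧ ∃ t, i < t ∧ t < e ∧ T x t) with hZa
  set Zb := U.filter (fun x => b < x ∧ ∃ t, i < t ∧ t < e ∧ T x t) with hZb
  set Zc := U.filter (fun x => x ∈ Set.Icc a b) with hZc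
  have hsub : visible n s T R e ⊆ visible n s T R i ∪ (Zl ∪ Zr ∪ (Za ∪ Zb) ∪ Zc) := by
    intro x hx
    obtain ⟨hxU, hxR, hv⟩ := mem_visible.1 hx
    have late : ∀ u, i < u → u < e → T x u → x ∈ Za ∪ Zb ∪ Zc := by
      intro u h1 h2 h3
      simp only [hZa, hZb, hZc, Finset.mem_union, Finset.mem_filter, Set.mem_Icc]
      rcases lt_or_ge x a with h | h
      · exact Or.inl (Or.inl ⟨hxU, h, u, h1, h2, h3⟩)
      rcases lt_or_ge b x with h' | h'
      · exact Or.inl (Or.inr ⟨hxU, h', u, h1, h2, h3⟩)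
      · exact Or.inr ⟨hxU, h, h'⟩
    simp only [Finset.mem_union] at late ⊢
    rcases hv with ⟨u, hu, hxu, h⟩ | ⟨u, hu, hxu, h⟩
    · rcases lt_trichotomy u i with hui | rfl | hui
      · exact Or.inl (mem_visible.2 ⟨hxU, hxR, Or.inl ⟨u, hui, hxu, fun y hy u' h1 h2 =>
          h y hy u' h1 (h2.trans hB.lt)⟩⟩)
      · have : x ∈ Zl := Finset.mem_filter.2 ⟨hxU, hxR, hxu, fun y hy hyx hyu =>
          (h y ⟨hy, hyx⟩ u le_rfl hu hyu).1⟩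
        tauto
      · have := late u hui hu hxu
        tauto
    · rcases lt_trichotomy u i with hui | rfl | hui
      · exact Or.inl (mem_visible.2 ⟨hxU, hxR, Or.inr ⟨u, hui, hxu, fun y hy u' h1 h2 =>
          h y hy u' h1 (h2.trans hB.lt)⟩⟩)
      · have : x ∈ Zr := Finset.mem_filter.2 ⟨hxU, hxR, hxu, fun y hy hyx hyu =>
          (h y ⟨hy, hyx⟩ u le_rfl hu hyu).1⟩
        tauto
      · have := late u hui hu hxu
        tauto
  have hl : (Zl.image col).card ≤ 1 := card_image_le.trans <| card_le_one.2 fun x hx y hy => by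
    obtain ⟨-, hx1, hx2, hx3⟩ := Finset.mem_filter.1 hx
    obtain ⟨-, hy1, hy2, hy3⟩ := Finset.mem_filter.1 hy
    rcases le_total x y with h | h
    · exact hy3 x hx1 h hx2
    · exact (hx3 y hy1 h hy2).symm
  have hr : (Zr.image col).card ≤ 1 := card_image_le.trans <| card_le_one.2 fun x hx y hy => by
    obtain ⟨-, hx1, hx2, hx3⟩ := Finset.mem_filter.1 hx
    obtain ⟨-, hy1, hy2, hy3⟩ := Finset.mem_filter.1 hy
    rcases le_total x y with h | h
    · exact (hx3 y hy1 h hy2).symm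
    · exact hy3 x hx1 h hx2
  have ha : (Za.image col).card ≤ 1 := card_image_le.trans <| card_le_one.2 fun x hx y hy => by
    obtain ⟨-, hx1, t, hx2, hx3, hx4⟩ := Finset.mem_filter.1 hx
    obtain ⟨-, hy1, t', hy2, hy3, hy4⟩ := Finset.mem_filter.1 hy
    exact hT.eq_of_touch_left hB hx1 hx2 hx3 hx4 hy1 hy2 hy3 hy4
  have hb : (Zb.image col).card ≤ 1 := card_image_le.trans <| card_le_one.2 fun x hx y hy => by
    obtain ⟨-, hx1, t, hx2, hx3, hx4⟩ := Finset.mem_filter.1 hx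
    obtain ⟨-, hy1, t', hy2, hy3, hy4⟩ := Finset.mem_filter.1 hy
    exact hT.eq_of_touch_right hB hx1 hx2 hx3 hx4 hy1 hy2 hy3 hy4
  have hc : (Zc.image col).card ≤ 1 := card_le_one.2 fun x hx y hy => by
    obtain ⟨x', hx', rfl⟩ := Finset.mem_image.1 hx
    obtain ⟨y', hy', rfl⟩ := Finset.mem_image.1 hy
    exact hcol _ (Finset.mem_filter.1 hx').2 _ (Finset.mem_filter.1 hy').2
  have h := card_le_card (Finset.image_subset_image (f := col) hsub)
  simp only [Finset.image_union] at h
  have h1 := card_union_le ((visible n s T R i).image col)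
    (Zl.image col ∪ Zr.image col ∪ (Za.image col ∪ Zb.image col) ∪ Zc.image col)
  have h2 := card_union_le (Zl.image col ∪ Zr.image col ∪ (Za.image col ∪ Zb.image col))
    (Zc.image col)
  have h3 := card_union_le (Zl.image col ∪ Zr.image col) (Za.image col ∪ Zb.image col)
  have h4 := card_union_le (Zl.image col) (Zr.image col)
  have h5 := card_union_le (Za.image col) (Zb.image col)
  omega

theorem visible_eq_empty (hT : GreedyRun n s T) {R : Set ℤ} {i e : ℕ} {a b : ℤ}
    (hB : IsTimeBlock n s i e a b)
    (hR : R ⊆ Set.Icc a b) {t : ℕ} (ht : t ≤ i) : visible n s T R t = ∅ := by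
  refine Finset.eq_empty_of_forall_notMem fun x hx => ?_
  obtain ⟨-, hxR, ⟨u, hu, hxu, -⟩ | ⟨u, hu, hxu, -⟩⟩ := mem_visible.1 hx <;>
  exact hT.not_touch_of_block hB (hR hxR) (by omega) hxu

end GreedyRun
end Model
/-- The block of the times `[i, e)` and keys `[a, b]` is partitioned into `m` blocks, listed by
increasing keys. -/
structure IsBlockPartition (n : ℕ) (s : ℕ → ℤ) (i e : ℕ) (a b : ℤ) (m : ℕ) (st en : ℕ → ℕ)
    (ka kb : ℕ → ℤ) : Prop where
  block : IsTimeBlock n s i e a b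
  part : ∀ κ < m, IsTimeBlock n s (st κ) (en κ) (ka κ) (kb κ)
  time_cover : ∀ t, i ≤ t → t < e → ∃ κ < m, st κ ≤ t ∧ t < en κ
  time_within : ∀ κ < m, i ≤ st κ ∧ en κ ≤ e
  key_cover : ∀ x ∈ Set.Icc a b, ∃ κ < m, x ∈ Set.Icc (ka κ) (kb κ)
  key_within : ∀ κ < m, a ≤ ka κ ∧ kb κ ≤ b
  key_lt : ∀ κ κ', κ < κ' → κ' < m → kb κ < ka κ'

/-- If every pair of disjoint intervals of indices is linearly sparse, then the relation `M` has
`O(m log m)` pairs. -/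
theorem sum_card_filter_le_of_sparse {M : ℕ → ℕ → Prop} {m : ℕ}
    (hM : ∀ lo hi p q, hi ≤ m → q ≤ m → hi ≤ p ∨ q ≤ lo →
      ∑ κ ∈ Ico lo hi, ((Ico p q).filter (M κ)).card ≤ 2 * (hi - lo) + 5 * (q - p)) (h : ℕ) :
    ∀ lo hi, hi ≤ m → hi - lo ≤ 2 ^ h →
      ∑ κ ∈ Ico lo hi, ((Ico lo hi).filter (fun κ' => κ' ≠ κ ∧ M κ κ')).card
        ≤ 7 * h * (hi - lo) := by
  induction h with
  | zero =>
    intro lo hi _ hle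
    refine (Finset.sum_eq_zero fun κ hκ => ?_).le.trans (Nat.zero_le _)
    rw [Finset.card_eq_zero, Finset.filter_eq_empty_iff]
    intro κ' hκ'
    rw [Finset.mem_Ico] at hκ hκ'
    omega
  | succ h ih =>
    intro lo hi him hle
    rcases le_total hi lo with hl | hl
    · simp [hl]
    obtain ⟨mid, h1, h2, h3, h4⟩ : ∃ mid, lo ≤ mid ∧ mid ≤ hi ∧ mid - lo ≤ 2 ^ h ∧
        hi - mid ≤ 2 ^ h := by
      rw [pow_succ] at hle
      exact ⟨lo + (hi - lo) / 2, by omega, by omega, by omega, by omega⟩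
    have split : ∀ κ, ((Ico lo hi).filter (fun κ' => κ' ≠ κ ∧ M κ κ')).card ≤
        ((Ico lo mid).filter (fun κ' => κ' ≠ κ ∧ M κ κ')).card +
        ((Ico mid hi).filter (fun κ' => κ' ≠ κ ∧ M κ κ')).card := by
      intro κ
      rw [← Finset.Ico_union_Ico_eq_Ico h1 h2, Finset.filter_union]
      exact card_union_le _ _
    have weaken : ∀ κ p q, ((Ico p q).filter (fun κ' => κ' ≠ κ ∧ M κ κ')).card ≤
        ((Ico p q).filter (M κ)).card := fun κ p q =>
      card_le_card (Finset.monotone_filter_right _ fun _ _ h => h.2)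
    rw [← Finset.sum_Ico_consecutive _ h1 h2]
    have e1 : ∑ κ ∈ Ico lo mid, ((Ico lo hi).filter (fun κ' => κ' ≠ κ ∧ M κ κ')).card ≤
        7 * h * (mid - lo) + (2 * (mid - lo) + 5 * (hi - mid)) := by
      refine le_trans (Finset.sum_le_sum fun κ _ => (split κ).trans
        (Nat.add_le_add_left (weaken κ mid hi) _)) ?_
      rw [Finset.sum_add_distrib]
      exact Nat.add_le_add (ih lo mid (h2.trans him) h3)
        (hM lo mid mid hi (h2.trans him) him (Or.inl le_rfl))
    have e2 : ∑ κ ∈ Ico mid hi, ((Ico lo hi).filter (fun κ' => κ' ≠ κ ∧ M κ κ')).card ≤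
        (2 * (hi - mid) + 5 * (mid - lo)) + 7 * h * (hi - mid) := by
      refine le_trans (Finset.sum_le_sum fun κ _ => (split κ).trans
        (Nat.add_le_add_right (weaken κ lo mid) _)) ?_
      rw [Finset.sum_add_distrib]
      exact Nat.add_le_add (hM mid hi lo mid him (h2.trans him) (Or.inr le_rfl))
        (ih mid hi him h4)
    refine (Nat.add_le_add e1 e2).trans ?_
    obtain ⟨x, rfl⟩ := Nat.exists_eq_add_of_le h1
    obtain ⟨y, rfl⟩ := Nat.exists_eq_add_of_le h2
    rw [show lo + x + y - lo = x + y by omega, show lo + x - lo = x by omega,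
      show lo + x + y - (lo + x) = y by omega]
    exact le_of_eq (by ring)

section Partition

variable {n : ℕ} {s : ℕ → ℤ} {T : ℤ → ℕ → Prop} {i e : ℕ} {a b : ℤ} {m : ℕ}
  {st en : ℕ → ℕ} {ka kb : ℕ → ℤ}

namespace IsBlockPartition

theorem eq_of_mem (hP : IsBlockPartition n s i e a b m st en ka kb) {κ κ' : ℕ} (hκ : κ < m)
    (hκ' : κ' < m) {x : ℤ} (hx : x ∈ Set.Icc (ka κ) (kb κ))
    (hx' : x ∈ Set.Icc (ka κ') (kb κ')) : κ = κ' := by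
  rw [Set.mem_Icc] at hx hx'
  rcases lt_trichotomy κ κ' with h | h | h
  · have := hP.key_lt _ _ h hκ'
    omega
  · exact h
  · have := hP.key_lt _ _ h hκ
    omega

theorem sum_sum_Ico {N : Type*} [AddCommMonoid N]
    (hP : IsBlockPartition n s i e a b m st en ka kb) (g : ℕ → N) :
    ∑ κ ∈ range m, ∑ t ∈ Ico (st κ) (en κ), g t = ∑ t ∈ Ico i e, g t := by
  rw [← Finset.sum_biUnion]
  · congr 1
    ext t
    simp only [Finset.mem_biUnion, Finset.mem_range, Finset.mem_Ico]
    constructor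
    · rintro ⟨κ, h1, h2⟩
      have := hP.time_within κ h1
      omega
    · rintro ⟨h1, h2⟩
      exact hP.time_cover t h1 h2
  · intro κ hκ κ' hκ' hne
    refine Finset.disjoint_left.2 fun t h1 h2 => hne ?_
    rw [Finset.mem_coe, Finset.mem_range] at hκ hκ'
    rw [Finset.mem_Ico] at h1 h2
    have htn : t < n := h1.2.trans_le (hP.part κ hκ).le
    exact hP.eq_of_mem hκ hκ' (((hP.part κ hκ).mem_iff t htn).2 h1)
      (((hP.part κ' hκ').mem_iff t htn).2 h2)

theorem sum_sub (hP : IsBlockPartition n s i e a b m st en ka kb) (f : ℕ → ℤ) :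
    ∑ κ ∈ range m, (f (en κ) - f (st κ)) = f e - f i := by
  rw [← Finset.sum_Ico_sub f hP.block.lt.le, ← hP.sum_sum_Ico]
  refine Finset.sum_congr rfl fun κ hκ => ?_
  rw [Finset.sum_Ico_sub f (hP.part κ (Finset.mem_range.1 hκ)).lt.le]

theorem exists_monotone_index (hP : IsBlockPartition n s i e a b m st en ka kb) :
    ∃ col : ℤ → ℕ, Monotone col ∧ ∀ κ < m, ∀ x ∈ Set.Icc (ka κ) (kb κ), col x = κ := by
  refine ⟨fun x => ((range m).filter (fun κ => kb κ < x)).card, fun x y hxy => ?_, ?_⟩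
  · exact card_le_card (Finset.monotone_filter_right _ fun _ _ h => h.trans_le hxy)
  · intro κ hκ x hx
    rw [Set.mem_Icc] at hx
    have : (range m).filter (fun κ => kb κ < x) = range κ := by
      ext κ'
      rw [Finset.mem_filter, Finset.mem_range, Finset.mem_range]
      constructor
      · rintro ⟨h1, h2⟩
        by_contra h
        rcases (not_lt.1 h).eq_or_lt with rfl | h
        · omega
        · have h3 := hP.key_lt _ _ h h1
          have := (hP.part κ' h1)
          have h4 := (this.mem_iff (st κ') (this.lt.trans_le this.le)).2 ⟨le_rfl, this.lt⟩
          rw [Set.mem_Icc] at h4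
          omega
      · intro h
        have := hP.key_lt _ _ h hκ
        omega
    simp only [this, Finset.card_range]

theorem access_mem (hP : IsBlockPartition n s i e a b m st en ka kb) {κ t : ℕ} (hκ : κ < m)
    (h1 : st κ ≤ t) (h2 : t < en κ) : s t ∈ Set.Icc (ka κ) (kb κ) :=
  ((hP.part κ hκ).mem_iff t (h2.trans_le (hP.part κ hκ).le)).2 ⟨h1, h2⟩

end IsBlockPartition

namespace GreedyRun

/-- First accesses of parts with index in `D` touch only few parts with index in `[p, q)`. -/
theorem sum_card_touched_parts_le (hT : GreedyRun n s T)
    (hP : IsBlockPartition n s i e a b m st en ka kb) {D : Finset ℕ} (hD : D ⊆ range m)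
    {p q : ℕ} (hq : q ≤ m) (hdisj : Disjoint D (Ico p q)) :
    ∑ κ ∈ D, ((Ico p q).filter
      (fun κ' => ∃ x ∈ Set.Icc (ka κ') (kb κ'), T x (st κ))).card ≤ 2 * D.card + 5 * (q - p) := by
  obtain ⟨col, hmono, hcol⟩ := hP.exists_monotone_index
  obtain ⟨R, hRdef⟩ : ∃ R : Set ℤ, R = Set.Icc a b ∩ col ⁻¹' Set.Ico p q := ⟨_, rfl⟩
  have hR : R.OrdConnected := hRdef ▸ Set.ordConnected_Icc.inter
    (Set.OrdConnected.preimage_mono Set.ordConnected_Ico hmono)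
  have hRsub : R ⊆ Set.Icc a b := hRdef ▸ Set.inter_subset_left
  set W : ℕ → ℤ := fun t => (((visible n s T R t).image col).card : ℤ) with hW
  have hWi : W i = 0 := by
    simp only [hW, hT.visible_eq_empty hP.block hRsub le_rfl, Finset.image_empty,
      Finset.card_empty, Nat.cast_zero]
  have hout : ∀ κ < m, κ ∉ Ico p q → ∀ t, st κ ≤ t → t < en κ → s t ∉ R := by
    intro κ hκ hnot t h1 h2 hmem
    have := hcol κ hκ _ (hP.access_mem hκ h1 h2)
    rw [hRdef, Set.mem_inter_iff, Set.mem_preimage, this] at hmem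
    exact hnot (Finset.mem_Ico.2 hmem.2)
  have hdec : ∀ κ < m, κ ∉ Ico p q → W (en κ) ≤ W (st κ + 1) := by
    intro κ hκ hnot
    refine Nat.cast_le.2 (card_le_card (Finset.image_subset_image ?_))
    exact hT.visible_subset_of_le hR (hP.part κ hκ).lt
      fun u h1 h2 => hout κ hκ hnot u (by omega) h2
  set c : ℕ → ℕ := fun κ => ((Ico p q).filter
      (fun κ' => ∃ x ∈ Set.Icc (ka κ') (kb κ'), T x (st κ))).card with hc
  have hstep : ∀ κ ∈ range m, (if κ ∈ D then (c κ : ℤ) else 0) + (W (en κ) - W (st κ)) ≤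
      (if κ ∈ D then 2 else 0) + (if κ ∈ Ico p q then 5 else 0) := by
    intro κ hκ
    rw [Finset.mem_range] at hκ
    by_cases hpq : κ ∈ Ico p q
    · have hκD : κ ∉ D := fun h => Finset.disjoint_left.1 hdisj h hpq
      have := hT.card_image_visible_block_le (col := col) (R := R) (hP.part κ hκ)
        (fun x hx y hy => by rw [hcol κ hκ x hx, hcol κ hκ y hy])
      simp only [hκD, hpq, if_true, if_false, hW]
      omega
    · have hout' := hout κ hκ hpq (st κ) le_rfl (hP.part κ hκ).lt
      have h1 := hdec κ hκ hpq
      have h2 := hT.card_image_touched_add_le hmono hR hout'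
      have h3 : c κ ≤ (((touched n s T (st κ)).filter (· ∈ R)).image col).card := by
        refine card_le_card fun κ' hκ' => ?_
        obtain ⟨hκ'1, x, hx, hxT⟩ := Finset.mem_filter.1 hκ'
        have hκ'm : κ' < m := (Finset.mem_Ico.1 hκ'1).2.trans_le hq
        have hw := hP.key_within κ' hκ'm
        have hcx := hcol κ' hκ'm x hx
        refine Finset.mem_image.2 ⟨x, Finset.mem_filter.2 ⟨hT.mem_touched.2 hxT, ?_⟩, hcx⟩
        rw [hRdef, Set.mem_inter_iff, Set.mem_preimage, hcx]
        exact ⟨⟨hw.1.trans hx.1, hx.2.trans hw.2⟩, Finset.mem_Ico.1 hκ'1⟩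
      have h4 : W (st κ + 1) ≤ W (st κ) := Nat.cast_le.2
        (card_le_card (Finset.image_subset_image (hT.visible_succ_subset hR hout')))
      simp only [hpq, if_false]
      simp only [hW] at h1 h4 ⊢
      split_ifs <;> omega
  have hsum := Finset.sum_le_sum hstep
  rw [Finset.sum_add_distrib, Finset.sum_add_distrib, hP.sum_sub W, Finset.sum_ite_mem,
    Finset.sum_ite_mem, Finset.sum_ite_mem, Finset.inter_eq_right.2 hD,
    Finset.inter_eq_right.2 (fun κ hκ => Finset.mem_range.2
      ((Finset.mem_Ico.1 hκ).2.trans_le hq)), hWi, Finset.sum_const, Finset.sum_const,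
    Nat.card_Ico, ← Nat.cast_sum] at hsum
  have : 0 ≤ W e := Nat.cast_nonneg _
  simp only [nsmul_eq_mul] at hsum
  zify
  push_cast at hsum
  linarith

end GreedyRun
end Partition

/-- The number of touches during the block of times `[i, e)`, not counting those made by its
first access outside the block. -/
noncomputable def blockCost (n : ℕ) (s : ℕ → ℤ) (T : ℤ → ℕ → Prop) (i e : ℕ) : ℕ :=
  1 + ∑ t ∈ Ico (i + 1) e, (touched n s T t).card

section Cost

variable {n : ℕ} {s : ℕ → ℤ} {T : ℤ → ℕ → Prop} {i e : ℕ} {a b : ℤ} {m : ℕ}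
  {st en : ℕ → ℕ} {ka kb : ℕ → ℤ}

theorem sum_card_touched_add_one (hie : i < e) :
    ∑ t ∈ Ico i e, (touched n s T t).card + 1 = (touched n s T i).card + blockCost n s T i e := by
  rw [Finset.sum_eq_sum_Ico_succ_bot hie, blockCost]
  omega

namespace GreedyRun

/-- The first access of a part touches inside the block only its own key and keys in the other
parts. -/
theorem card_touched_inside_le (hT : GreedyRun n s T)
    (hP : IsBlockPartition n s i e a b m st en ka kb) {κ : ℕ} (hκ : κ < m) :
    ((touched n s T (st κ)).filter (· ∈ Set.Icc a b)).card ≤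
      1 + ∑ κ' ∈ range m, if κ' = κ then 0 else
        ((touched n s T (st κ)).filter (· ∈ Set.Icc (ka κ') (kb κ'))).card := by
  have hsub : (touched n s T (st κ)).filter (· ∈ Set.Icc a b) ⊆
      {s (st κ)} ∪ (range m).biUnion (fun κ' => if κ' = κ then ∅ else
        (touched n s T (st κ)).filter (· ∈ Set.Icc (ka κ') (kb κ'))) := by
    intro x hx
    obtain ⟨hxT, hxab⟩ := Finset.mem_filter.1 hx
    obtain ⟨κ', hκ', hxκ'⟩ := hP.key_cover x hxab
    rw [Finset.mem_union, Finset.mem_singleton, Finset.mem_biUnion]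
    by_cases hne : κ' = κ
    · left
      subst hne
      obtain ⟨u, hu, hun, rfl⟩ := hT.exists_access_le (hT.mem_touched.1 hxT)
      have := ((hP.part κ' hκ).mem_iff u hun).1 hxκ'
      rw [le_antisymm hu this.1]
    · right
      refine ⟨κ', Finset.mem_range.2 hκ', ?_⟩
      rw [if_neg hne]
      exact Finset.mem_filter.2 ⟨hxT, hxκ'⟩
  refine (card_le_card hsub).trans ((card_union_le _ _).trans ?_)
  rw [Finset.card_singleton]
  refine Nat.add_le_add_left (card_biUnion_le.trans (Finset.sum_le_sum fun κ' _ => ?_)) 1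
  split_ifs <;> simp

/-- Amortized bound for the touches inside one part by the first accesses of the others. -/
theorem sum_card_touched_part_le (hT : GreedyRun n s T)
    (hP : IsBlockPartition n s i e a b m st en ka kb) {κ' : ℕ} (hκ' : κ' < m) :
    (∑ κ ∈ range m, if κ' = κ then 0 else
        ((touched n s T (st κ)).filter (· ∈ Set.Icc (ka κ') (kb κ'))).card) +
      (visible n s T (Set.Icc (ka κ') (kb κ')) e).card ≤
    (visible n s T (Set.Icc (ka κ') (kb κ')) (en κ')).card +
      2 * ((range m).filter (fun κ => κ' ≠ κ ∧
        ∃ x ∈ Set.Icc (ka κ') (kb κ'), T x (st κ))).card := by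
  obtain ⟨K, hK⟩ : ∃ K : Set ℤ, K = Set.Icc (ka κ') (kb κ') := ⟨_, rfl⟩
  simp only [← hK]
  have hR : K.OrdConnected := hK ▸ Set.ordConnected_Icc
  have hKsub : K ⊆ Set.Icc a b := hK ▸ Set.Icc_subset_Icc (hP.key_within κ' hκ').1
    (hP.key_within κ' hκ').2
  set W : ℕ → ℤ := fun t => ((visible n s T K t).card : ℤ) with hW
  have hWi : W i = 0 := by
    simp only [hW, hT.visible_eq_empty hP.block hKsub le_rfl, Finset.card_empty, Nat.cast_zero]
  have hstep : ∀ κ ∈ range m,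
      (((if κ' = κ then 0 else ((touched n s T (st κ)).filter (· ∈ K)).card : ℕ)) : ℤ) +
        (W (en κ) - W (st κ)) ≤
      (if κ' = κ then W (en κ) else 0) +
        2 * (if κ' ≠ κ ∧ ∃ x ∈ K, T x (st κ) then 1 else 0) := by
    intro κ hκ
    rw [Finset.mem_range] at hκ
    by_cases hne : κ' = κ
    · have : 0 ≤ W (st κ) := Nat.cast_nonneg _
      simp only [hne, if_true, ne_eq, not_true_eq_false, false_and, if_false]
      push_cast
      omega
    · have hout : ∀ t, st κ ≤ t → t < en κ → s t ∉ K := fun t h1 h2 h3 =>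
        hne (hP.eq_of_mem hκ' hκ (hK ▸ h3) (hP.access_mem hκ h1 h2))
      have hout' := hout (st κ) le_rfl (hP.part κ hκ).lt
      have h1 : W (en κ) ≤ W (st κ + 1) := Nat.cast_le.2 (card_le_card
        (hT.visible_subset_of_le hR (hP.part κ hκ).lt fun u h1 h2 => hout u (by omega) h2))
      have h2 := hT.card_image_touched_add_le monotone_id hR hout'
      simp only [Finset.image_id] at h2
      have h3 : W (st κ + 1) ≤ W (st κ) := Nat.cast_le.2
        (card_le_card (hT.visible_succ_subset hR hout'))
      by_cases hM : ∃ x ∈ K, T x (st κ)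
      · simp only [hne, hM, if_false, ne_eq, not_false_eq_true, true_and, if_true]
        simp only [hW] at h1 ⊢
        omega
      · have h4 : (touched n s T (st κ)).filter (· ∈ K) = ∅ :=
          Finset.filter_eq_empty_iff.2 fun x hx hxK => hM ⟨x, hxK, hT.mem_touched.1 hx⟩
        simp only [hne, hM, if_false, and_false, h4, Finset.card_empty, Nat.cast_zero]
        omega
  have hsum := Finset.sum_le_sum hstep
  rw [Finset.sum_add_distrib, Finset.sum_add_distrib, hP.sum_sub W, ← Nat.cast_sum,
    Finset.sum_ite_eq, if_pos (Finset.mem_range.2 hκ'), ← Finset.mul_sum, Finset.sum_boole,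
    hWi] at hsum
  simp only [hW] at hsum
  rw [← Nat.cast_le (α := ℤ)]
  push_cast at hsum ⊢
  linarith

theorem visible_subset_biUnion (hP : IsBlockPartition n s i e a b m st en ka kb) (t : ℕ) :
    visible n s T (Set.Icc a b) t ⊆
      (range m).biUnion (fun κ => visible n s T (Set.Icc (ka κ) (kb κ)) t) := by
  intro x hx
  obtain ⟨hxU, hxab, hv⟩ := mem_visible.1 hx
  obtain ⟨κ, hκ, hxκ⟩ := hP.key_cover x hxab
  have hsub : Set.Icc (ka κ) (kb κ) ⊆ Set.Icc a b :=
    Set.Icc_subset_Icc (hP.key_within κ hκ).1 (hP.key_within κ hκ).2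
  exact Finset.mem_biUnion.2 ⟨κ, Finset.mem_range.2 hκ, mem_visible.2 ⟨hxU, hxκ,
    hv.imp (fun h => h.mono (Set.inter_subset_inter_left _ hsub))
      (fun h => h.mono (Set.inter_subset_inter_left _ hsub))⟩⟩

/-- The recursive bound for the cost of a block. -/
theorem blockCost_le_sum (hT : GreedyRun n s T)
    (hP : IsBlockPartition n s i e a b m st en ka kb) {h : ℕ} (hm : m ≤ 2 ^ h) :
    blockCost n s T i e + (visible n s T (Set.Icc a b) e).card ≤
      ∑ κ ∈ range m, (blockCost n s T (st κ) (en κ) +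
        (visible n s T (Set.Icc (ka κ) (kb κ)) (en κ)).card) + (2 + 14 * h) * m := by
  set X : ℕ → ℕ → ℕ := fun κ κ' => if κ' = κ then 0 else
    ((touched n s T (st κ)).filter (· ∈ Set.Icc (ka κ') (kb κ'))).card with hX
  set M : ℕ → ℕ → Prop := fun κ κ' => ∃ x ∈ Set.Icc (ka κ') (kb κ'), T x (st κ) with hM
  have hfirst : ∑ κ ∈ range m, (touched n s T (st κ)).card + 3 ≤
      (touched n s T i).card + 3 * m + ∑ κ ∈ range m, ∑ κ' ∈ range m, X κ κ' := by
    obtain ⟨κ₀, hκ₀, h1, h2⟩ := hP.time_cover i le_rfl hP.block.lt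
    have hst : st κ₀ = i := le_antisymm h1 (hP.time_within κ₀ hκ₀).1
    have hmem : κ₀ ∈ range m := Finset.mem_range.2 hκ₀
    have hbound : ∀ κ ∈ (range m).erase κ₀,
        (touched n s T (st κ)).card ≤ 3 + ∑ κ' ∈ range m, X κ κ' := by
      intro κ hκ
      obtain ⟨hne, hκm⟩ := Finset.mem_erase.1 hκ
      rw [Finset.mem_range] at hκm
      have hκn := hP.part κ hκm
      have hw := hP.time_within κ hκm
      have hlt : i < st κ := by
        refine lt_of_le_of_ne hw.1 fun heq => hne ?_
        refine hP.eq_of_mem hκm hκ₀ (hP.access_mem hκm le_rfl hκn.lt) ?_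
        rw [← heq, ← hst]
        exact hP.access_mem hκ₀ le_rfl (hP.part κ₀ hκ₀).lt
      have h1 := hT.card_touched_outside_le hP.block hlt (hκn.lt.trans_le hw.2)
      have h2 := hT.card_touched_inside_le hP hκm
      have h3 := Finset.card_filter_add_card_filter_not (s := touched n s T (st κ))
        (fun x => x ∈ Set.Icc a b)
      simp only [hX]
      omega
    have h3 := Finset.add_sum_erase _ (fun κ => (touched n s T (st κ)).card) hmem
    have h4 := Finset.add_sum_erase _ (fun κ => ∑ κ' ∈ range m, X κ κ') hmem
    have h5 := Finset.sum_le_sum hbound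
    rw [Finset.sum_add_distrib, Finset.sum_const, Finset.card_erase_of_mem hmem,
      Finset.card_range, smul_eq_mul] at h5
    simp only [hst] at h3
    omega
  have hsecond : ∑ κ ∈ range m, ∑ κ' ∈ range m, X κ κ' +
      ∑ κ ∈ range m, (visible n s T (Set.Icc (ka κ) (kb κ)) e).card ≤
      ∑ κ ∈ range m, (visible n s T (Set.Icc (ka κ) (kb κ)) (en κ)).card + 14 * h * m := by
    have hpairs : ∑ κ' ∈ range m, ((range m).filter (fun κ => κ' ≠ κ ∧ M κ κ')).card ≤
        7 * h * m := by
      have := sum_card_filter_le_of_sparse (M := M) (m := m) (fun lo hi p q hhi hq hd => by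
        have := hT.sum_card_touched_parts_le hP (D := Ico lo hi) (p := p) (q := q)
          (fun κ hκ => Finset.mem_range.2 ((Finset.mem_Ico.1 hκ).2.trans_le hhi)) hq
          (Finset.disjoint_left.2 fun κ h1 h2 => by
            rw [Finset.mem_Ico] at h1 h2
            omega)
        rwa [Nat.card_Ico] at this) h 0 m le_rfl (by simpa using hm)
      rw [Nat.Ico_zero_eq_range, Nat.sub_zero] at this
      refine le_trans (le_of_eq ?_) this
      simp only [Finset.card_filter]
      exact Finset.sum_comm
    have hsum := Finset.sum_le_sum fun κ' hκ' =>
      hT.sum_card_touched_part_le hP (Finset.mem_range.1 hκ')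
    rw [Finset.sum_add_distrib, Finset.sum_add_distrib, ← Finset.mul_sum,
      Finset.sum_comm] at hsum
    simp only [hX]
    simp only [hM] at hpairs
    nlinarith
  have hvis := (card_le_card (visible_subset_biUnion (T := T) hP e)).trans card_biUnion_le
  have htotal : (touched n s T i).card + blockCost n s T i e + m =
      ∑ κ ∈ range m, (touched n s T (st κ)).card +
        ∑ κ ∈ range m, blockCost n s T (st κ) (en κ) + 1 := by
    rw [← sum_card_touched_add_one hP.block.lt, ← hP.sum_sum_Ico, ← Finset.sum_add_distrib,
      ← Finset.sum_congr rfl (fun κ hκ => sum_card_touched_add_one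
        (hP.part κ (Finset.mem_range.1 hκ)).lt), Finset.sum_add_distrib, Finset.sum_const,
      Finset.card_range, smul_eq_mul]
    omega
  rw [Finset.sum_add_distrib, add_mul]
  omega

end GreedyRun
end Cost

/-! ### The execution of GREEDY as an instance of the model -/

/-- The point set `X` consists of the points `(s t, t + 1)` for `t < n`, with distinct keys. -/
structure IsAccessSeq (n : ℕ) (X : Finset Pt) (s : ℕ → ℤ) : Prop where
  inj : ∀ t < n, ∀ t' < n, s t = s t' → t = t'
  mem_iff : ∀ p : Pt, p ∈ X ↔ ∃ t < n, p = (s t, (t : ℤ) + 1)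

theorem IsPermPointSet.exists_accessSeq {n : ℕ} {X : Finset Pt} (hX : IsPermPointSet n X) :
    ∃ s, IsAccessSeq n X s := by
  obtain ⟨σ, rfl⟩ := hX
  refine ⟨fun t => if h : t < n then ((σ ⟨t, h⟩ : ℕ) : ℤ) + 1 else 0, ?_, ?_⟩
  · intro t ht t' ht' h
    simp only [ht, ht', dif_pos, add_left_inj, Nat.cast_inj] at h
    simpa using σ.injective (Fin.ext h)
  · intro p
    simp only [Finset.mem_image, Finset.mem_univ, true_and]
    constructor
    · rintro ⟨t, rfl⟩
      exact ⟨t, t.2, by simp⟩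
    · rintro ⟨t, ht, rfl⟩
      exact ⟨⟨t, ht⟩, by simp [ht]⟩

theorem mem_greedyStep {X G : Finset Pt} {t : ℤ} {p : Pt} : p ∈ greedyStep X G t ↔
    p.2 = t ∧ ∃ x, (x, t) ∈ X ∧ p.1 ≠ x ∧ ∃ u < t, (p.1, u) ∈ X ∪ G ∧
      ∀ r ∈ X ∪ G, r.2 < t → inRect (x, t) (p.1, u) r → r = (p.1, u) := by
  simp only [greedyStep, Finset.mem_biUnion, Finset.mem_filter, Finset.mem_image]
  constructor
  · rintro ⟨⟨x, _⟩, ⟨hx, rfl⟩, ⟨y, u⟩, ⟨⟨hq, hu⟩, hne, h⟩, rfl⟩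
    exact ⟨rfl, x, hx, hne, u, hu, hq, fun r hr hrt => h r ⟨hr, hrt⟩⟩
  · rintro ⟨ht, x, hx, hne, u, hu, hq, h⟩
    exact ⟨(x, t), ⟨hx, rfl⟩, (p.1, u), ⟨⟨hq, hu⟩, hne, fun r hr => h r hr.1 hr.2⟩,
      Prod.ext rfl ht.symm⟩

theorem mem_greedyUpTo {X : Finset Pt} {m : ℕ} {p : Pt} : p ∈ greedyUpTo X m ↔
    ∃ t < m, p ∈ greedyStep X (greedyUpTo X t) ((t : ℤ) + 1) := by
  induction m with
  | zero => simp [greedyUpTo]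
  | succ m ih =>
    rw [greedyUpTo, Finset.mem_union, ih]
    constructor
    · rintro (⟨t, ht, h⟩ | h)
      · exact ⟨t, by omega, h⟩
      · exact ⟨m, by omega, h⟩
    · rintro ⟨t, ht, h⟩
      obtain rfl | ht := Nat.lt_succ_iff_lt_or_eq.1 ht |>.symm
      · exact Or.inr h
      · exact Or.inl ⟨t, ht, h⟩

theorem mem_greedyUpTo_iff_of_lt {X : Finset Pt} {m m' : ℕ} (hm : m ≤ m') {p : Pt}
    (hp : p.2 < (m : ℤ) + 1) : p ∈ greedyUpTo X m ↔ p ∈ greedyUpTo X m' := by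
  simp only [mem_greedyUpTo]
  constructor
  · rintro ⟨t, ht, h⟩
    exact ⟨t, by omega, h⟩
  · rintro ⟨t, ht, h⟩
    have := (mem_greedyStep.1 h).1
    exact ⟨t, by omega, h⟩

/-- The key `x` is touched by GREEDY at the time of the access with index `t`. -/
def greedyTouch (n : ℕ) (X : Finset Pt) (x : ℤ) (t : ℕ) : Prop :=
  (x, (t : ℤ) + 1) ∈ X ∪ greedyG n X

namespace IsAccessSeq

variable {n : ℕ} {X : Finset Pt} {s : ℕ → ℤ}

theorem mk_mem_iff (hs : IsAccessSeq n X s) {x : ℤ} {t : ℕ} :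
    (x, (t : ℤ) + 1) ∈ X ↔ t < n ∧ x = s t := by
  rw [hs.mem_iff]
  constructor
  · rintro ⟨u, hu, h⟩
    simp only [Prod.mk.injEq, add_left_inj, Nat.cast_inj] at h
    obtain ⟨rfl, rfl⟩ := h
    exact ⟨hu, rfl⟩
  · rintro ⟨ht, rfl⟩
    exact ⟨t, ht, rfl⟩

theorem exists_time (hs : IsAccessSeq n X s) {p : Pt} (hp : p ∈ X ∪ greedyG n X) :
    ∃ t < n, p.2 = (t : ℤ) + 1 := by
  obtain hp | hp := Finset.mem_union.1 hp
  · obtain ⟨t, ht, rfl⟩ := (hs.mem_iff p).1 hp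
    exact ⟨t, ht, rfl⟩
  · obtain ⟨t, ht, h⟩ := mem_greedyUpTo.1 hp
    exact ⟨t, ht, (mem_greedyStep.1 h).1⟩

theorem mem_greedyG_iff (hs : IsAccessSeq n X s) {x : ℤ} {t : ℕ} :
    (x, (t : ℤ) + 1) ∈ greedyG n X ↔
      t < n ∧ x ≠ s t ∧ Exposed (greedyTouch n X) (Set.uIcc (s t) x) x t := by
  have hrect : ∀ {y : ℤ} {u u' : ℕ}, u < t → u' < t →
      (inRect (s t, (t : ℤ) + 1) (x, (u : ℤ) + 1) (y, (u' : ℤ) + 1) ↔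
        y ∈ Set.uIcc (s t) x ∧ u ≤ u') := by
    intro y u u' hu hu'
    simp only [inRect, Set.uIcc, Set.mem_Icc]
    constructor
    · rintro ⟨h1, h2, h3, h4⟩
      exact ⟨⟨h1, h2⟩, by omega⟩
    · rintro ⟨⟨h1, h2⟩, h⟩
      exact ⟨h1, h2, by omega, by omega⟩
  have hmem : ∀ p : Pt, t < n → p.2 < (t : ℤ) + 1 →
      (p ∈ X ∪ greedyUpTo X t ↔ p ∈ X ∪ greedyG n X) := fun p ht hp => by
    rw [Finset.mem_union, Finset.mem_union, mem_greedyUpTo_iff_of_lt ht.le hp, greedyG]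
  constructor
  · intro h
    obtain ⟨t', ht, h⟩ := mem_greedyUpTo.1 h
    obtain ⟨htt, y, hy, hne, u, hu, hq, h⟩ := mem_greedyStep.1 h
    obtain rfl : t = t' := by simpa using htt
    obtain ⟨-, rfl⟩ := hs.mk_mem_iff.1 hy
    rw [hmem _ ht hu] at hq
    obtain ⟨v, hv, hvu⟩ := hs.exists_time hq
    obtain rfl : u = (v : ℤ) + 1 := hvu
    refine ⟨ht, hne, v, by omega, hq, fun z hz u' h1 h2 h3 => ?_⟩
    have := h (z, (u' : ℤ) + 1) ((hmem _ ht (by simpa using h2)).2 h3) (by simpa using h2)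
      ((hrect (by omega) h2).2 ⟨hz, h1⟩)
    simpa using this
  · rintro ⟨ht, hne, v, hv, hx, h⟩
    refine mem_greedyUpTo.2 ⟨t, ht, mem_greedyStep.2 ⟨rfl, s t, hs.mk_mem_iff.2 ⟨ht, rfl⟩, hne,
      (v : ℤ) + 1, by omega, (hmem _ ht (by simpa using hv)).2 hx, ?_⟩⟩
    rintro ⟨y, w⟩ hr hrt hin
    rw [hmem _ ht hrt] at hr
    obtain ⟨u', hu', hw⟩ := hs.exists_time hr
    obtain rfl : w = (u' : ℤ) + 1 := hw
    have hu't : u' < t := by simpa using hrt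
    obtain ⟨hy, hvu⟩ := (hrect hv hu't).1 hin
    obtain ⟨rfl, rfl⟩ := h y hy u' hvu hu't hr
    rfl

theorem greedyRun (hs : IsAccessSeq n X s) : GreedyRun n s (greedyTouch n X) where
  inj := hs.inj
  touch_iff x t := by
    rw [greedyTouch, Finset.mem_union, hs.mk_mem_iff, hs.mem_greedyG_iff]
    tauto

theorem card_le_blockCost (hs : IsAccessSeq n X s) (hn : 0 < n) :
    (X ∪ greedyG n X).card ≤ blockCost n s (greedyTouch n X) 0 n := by
  have hsub : X ∪ greedyG n X ⊆ (Ico 0 n).biUnion (fun t =>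
      (touched n s (greedyTouch n X) t).image (fun x => ((x, (t : ℤ) + 1) : Pt))) := by
    rintro ⟨x, w⟩ hp
    obtain ⟨t, ht, hw⟩ := hs.exists_time hp
    obtain rfl : w = (t : ℤ) + 1 := hw
    exact Finset.mem_biUnion.2 ⟨t, Finset.mem_Ico.2 ⟨t.zero_le, ht⟩,
      Finset.mem_image_of_mem _ (hs.greedyRun.mem_touched.2 hp)⟩
  have hle := ((card_le_card hsub).trans card_biUnion_le).trans
    (Finset.sum_le_sum fun t _ => Finset.card_image_le)
  have hfirst : touched n s (greedyTouch n X) 0 ⊆ {s 0} := by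
    intro x hx
    obtain ⟨-, h | ⟨u, hu, -⟩⟩ := (hs.greedyRun.touch_iff x 0).1 (hs.greedyRun.mem_touched.1 hx)
    · exact Finset.mem_singleton.2 h
    · exact absurd hu u.not_lt_zero
  have hone := card_le_card hfirst
  rw [Finset.card_singleton] at hone
  have := sum_card_touched_add_one (n := n) (s := s) (T := greedyTouch n X) hn
  omega

end IsAccessSeq

/-! ### Decomposition trees -/

/-- The set `B` consists of the points with times in `[i, e)`, and its set of keys is
`[a, b]`. -/
structure IsPointBlock (n : ℕ) (s : ℕ → ℤ) (B : Finset Pt) (i e : ℕ) (a b : ℤ) : Prop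
    extends IsTimeBlock n s i e a b where
  mem_iff_time : ∀ p : Pt, p ∈ B ↔ ∃ t, i ≤ t ∧ t < e ∧ p = (s t, (t : ℤ) + 1)
  exists_key : ∀ x ∈ Set.Icc a b, ∃ t, i ≤ t ∧ t < e ∧ s t = x

theorem IsBlock.exists_pointBlock {n : ℕ} {X : Finset Pt} {s : ℕ → ℤ} (hs : IsAccessSeq n X s)
    {B : Finset Pt} (hB : IsBlock X B) : ∃ i e a b, IsPointBlock n s B i e a b := by
  obtain ⟨hne, ⟨i, j, hB⟩, c, d, hkeys⟩ := hB
  have hmem : ∀ p : Pt, p ∈ B ↔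
      ∃ t, (i - 1).toNat ≤ t ∧ t < min n j.toNat ∧ p = (s t, (t : ℤ) + 1) := by
    intro p
    rw [hB, Finset.mem_filter, hs.mem_iff]
    constructor
    · rintro ⟨⟨t, ht, rfl⟩, h1, h2⟩
      dsimp only at h1 h2
      exact ⟨t, by omega, by omega, rfl⟩
    · rintro ⟨t, h1, h2, rfl⟩
      exact ⟨⟨t, by omega, rfl⟩, by dsimp only; omega, by dsimp only; omega⟩
  have hkey : ∀ x, x ∈ Set.Icc c d ↔
      ∃ t, (i - 1).toNat ≤ t ∧ t < min n j.toNat ∧ s t = x := by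
    intro x
    rw [Set.mem_Icc, ← Finset.mem_Icc, ← hkeys, Finset.mem_image]
    constructor
    · rintro ⟨p, hp, rfl⟩
      obtain ⟨t, h1, h2, rfl⟩ := (hmem p).1 hp
      exact ⟨t, h1, h2, rfl⟩
    · rintro ⟨t, h1, h2, rfl⟩
      exact ⟨_, (hmem _).2 ⟨t, h1, h2, rfl⟩, rfl⟩
  obtain ⟨p, hp⟩ := hne
  obtain ⟨t, h1, h2, -⟩ := (hmem p).1 hp
  refine ⟨(i - 1).toNat, min n j.toNat, c, d, ⟨h1.trans_lt h2, min_le_left _ _, ?_⟩, hmem,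
    fun x hx => (hkey x).1 hx⟩
  intro u hu
  rw [hkey]
  constructor
  · rintro ⟨v, h3, h4, h5⟩
    obtain rfl := hs.inj v (by omega) u hu h5
    exact ⟨h3, h4⟩
  · rintro ⟨h3, h4⟩
    exact ⟨u, h3, h4, rfl⟩

theorem exists_sorted_enumeration {α : Type*} [Nonempty α] (F : Finset α) (g : α → ℤ)
    (hg : Set.InjOn g F) : ∃ c : ℕ → α, (∀ κ < F.card, c κ ∈ F) ∧
      (∀ x ∈ F, ∃ κ < F.card, c κ = x) ∧
      ∀ κ κ', κ < κ' → κ' < F.card → g (c κ) < g (c κ') := by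
  have hcard : (F.image g).card = F.card := Finset.card_image_of_injOn hg
  have hex : ∀ κ : ℕ, ∃ x : α, ∀ h : κ < F.card,
      x ∈ F ∧ g x = (F.image g).orderEmbOfFin hcard ⟨κ, h⟩ := by
    intro κ
    by_cases h : κ < F.card
    · obtain ⟨x, hx, hgx⟩ :=
        Finset.mem_image.1 ((F.image g).orderEmbOfFin_mem hcard ⟨κ, h⟩)
      exact ⟨x, fun _ => ⟨hx, hgx⟩⟩
    · exact ⟨Classical.arbitrary α, fun h' => absurd h' h⟩
  choose c hc using hex
  refine ⟨c, fun κ h => (hc κ h).1, fun x hx => ?_, fun κ κ' h h' => ?_⟩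
  · have : g x ∈ Set.range ((F.image g).orderEmbOfFin hcard) := by
      rw [Finset.range_orderEmbOfFin]
      exact Finset.mem_coe.2 (Finset.mem_image_of_mem g hx)
    obtain ⟨⟨κ, hκ⟩, h⟩ := this
    exact ⟨κ, hκ, hg (hc κ hκ).1 hx ((hc κ hκ).2.trans h)⟩
  · rw [(hc κ (h.trans h')).2, (hc κ' h').2]
    exact ((F.image g).orderEmbOfFin hcard).strictMono h

namespace DecompTree

variable {n : ℕ} {X : Finset Pt} {s : ℕ → ℤ}

theorem mem_children {D : DecompTree X} {B C : Finset Pt} :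
    C ∈ D.children B ↔ C ∈ D.nodes ∧ C ≠ X ∧ D.parent C = B := by
  simp only [children, Finset.mem_filter]

theorem ssubset_of_mem_children {D : DecompTree X} {B C : Finset Pt} (hC : C ∈ D.children B) :
    C ⊂ B := by
  obtain ⟨h1, h2, rfl⟩ := mem_children.1 hC
  exact D.ssubset_parent C h1 h2

theorem exists_mem_children (D : DecompTree X) {B : Finset Pt} (hB : B ∈ D.nodes)
    (hcard : B.card ≠ 1) {p : Pt} (hp : p ∈ B) : ∃ C ∈ D.children B, p ∈ C := by
  obtain ⟨C, ⟨h1, h2, h3, h4⟩, -⟩ := D.children_partition B hB hcard p hp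
  exact ⟨C, mem_children.2 ⟨h1, h2, h3⟩, h4⟩

theorem eq_of_mem_children (D : DecompTree X) {B : Finset Pt} (hB : B ∈ D.nodes)
    (hcard : B.card ≠ 1) {C C' : Finset Pt} (hC : C ∈ D.children B) (hC' : C' ∈ D.children B)
    {p : Pt} (hp : p ∈ C) (hp' : p ∈ C') : C = C' := by
  obtain ⟨h1, h2, h3⟩ := mem_children.1 hC
  obtain ⟨h1', h2', h3'⟩ := mem_children.1 hC'
  exact (D.children_partition B hB hcard p ((ssubset_of_mem_children hC).1 hp)).unique
    ⟨h1, h2, h3, hp⟩ ⟨h1', h2', h3', hp'⟩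

theorem two_le_card_children (D : DecompTree X) {B : Finset Pt} (hB : B ∈ D.nodes)
    (hcard : B.card ≠ 1) : 2 ≤ (D.children B).card := by
  obtain ⟨p, hp⟩ := (D.isBlock_nodes B hB).1
  obtain ⟨C, hC, hpC⟩ := D.exists_mem_children hB hcard hp
  obtain ⟨q, hq, hqC⟩ := Finset.exists_of_ssubset (ssubset_of_mem_children hC)
  obtain ⟨C', hC', hqC'⟩ := D.exists_mem_children hB hcard hq
  exact Finset.one_lt_card.2 ⟨C, hC, C', hC', fun h => hqC (h ▸ hqC')⟩

/-- The children of an internal node form a block partition of it. -/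
theorem exists_blockPartition (D : DecompTree X) (hs : IsAccessSeq n X s) {B : Finset Pt}
    (hB : B ∈ D.nodes) (hcard : B.card ≠ 1) {i e : ℕ} {a b : ℤ}
    (hblock : IsPointBlock n s B i e a b) :
    ∃ (c : ℕ → Finset Pt) (st en : ℕ → ℕ) (ka kb : ℕ → ℤ),
      (∀ κ < (D.children B).card, c κ ∈ D.children B ∧
        IsPointBlock n s (c κ) (st κ) (en κ) (ka κ) (kb κ)) ∧
      IsBlockPartition n s i e a b (D.children B).card st en ka kb := by
  have hex : ∀ C, ∃ i e a b, C ∈ D.nodes → IsPointBlock n s C i e a b := by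
    intro C
    by_cases hC : C ∈ D.nodes
    · obtain ⟨i, e, a, b, h⟩ := (D.isBlock_nodes C hC).exists_pointBlock hs
      exact ⟨i, e, a, b, fun _ => h⟩
    · exact ⟨0, 0, 0, 0, fun h => absurd h hC⟩
  choose I E A Z hpb using hex
  have hch : ∀ C ∈ D.children B, IsPointBlock n s C (I C) (E C) (A C) (Z C) :=
    fun C hC => hpb C (mem_children.1 hC).1
  have hmem : ∀ C ∈ D.children B, ∀ t < n, s t ∈ Set.Icc (A C) (Z C) →
      (s t, (t : ℤ) + 1) ∈ C := fun C hC t ht h =>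
    ((hch C hC).mem_iff_time _).2 ⟨t, ((hch C hC).mem_iff t ht).1 h |>.1,
      ((hch C hC).mem_iff t ht).1 h |>.2, rfl⟩
  have hmem' : ∀ C ∈ D.children B, ∀ t, (s t, (t : ℤ) + 1) ∈ C → I C ≤ t ∧ t < E C := by
    intro C hC t h
    obtain ⟨u, h1, h2, h3⟩ := ((hch C hC).mem_iff_time _).1 h
    obtain rfl : t = u := by simpa using (Prod.ext_iff.1 h3).2
    exact ⟨h1, h2⟩
  have hunique : ∀ C ∈ D.children B, ∀ C' ∈ D.children B, ∀ x,
      x ∈ Set.Icc (A C) (Z C) → x ∈ Set.Icc (A C') (Z C') → C = C' := by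
    intro C hC C' hC' x hx hx'
    obtain ⟨t, h1, h2, rfl⟩ := (hch C hC).exists_key x hx
    have ht : t < n := h2.trans_le (hch C hC).le
    exact D.eq_of_mem_children hB hcard hC hC' (hmem C hC t ht hx) (hmem C' hC' t ht hx')
  have hAZ : ∀ C ∈ D.children B, A C ≤ Z C := by
    intro C hC
    have h := (hch C hC).toIsTimeBlock
    have := (h.mem_iff (I C) (h.lt.trans_le h.le)).2 ⟨le_rfl, h.lt⟩
    exact this.1.trans this.2
  have hsub : ∀ C ∈ D.children B, ∀ t, I C ≤ t → t < E C → i ≤ t ∧ t < e := by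
    intro C hC t h1 h2
    obtain ⟨u, h3, h4, h5⟩ := (hblock.mem_iff_time _).1 ((ssubset_of_mem_children hC).1
      (((hch C hC).mem_iff_time (s t, (t : ℤ) + 1)).2 ⟨t, h1, h2, rfl⟩))
    obtain rfl : t = u := by simpa using (Prod.ext_iff.1 h5).2
    exact ⟨h3, h4⟩
  have hkeysub : ∀ C ∈ D.children B, ∀ x ∈ Set.Icc (A C) (Z C), x ∈ Set.Icc a b := by
    intro C hC x hx
    obtain ⟨t, h1, h2, rfl⟩ := (hch C hC).exists_key x hx
    exact (hblock.mem_iff t (h2.trans_le (hch C hC).le)).2 (hsub C hC t h1 h2)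
  have hcover : ∀ t, i ≤ t → t < e → ∃ C ∈ D.children B, (s t, (t : ℤ) + 1) ∈ C :=
    fun t h1 h2 => D.exists_mem_children hB hcard ((hblock.mem_iff_time _).2 ⟨t, h1, h2, rfl⟩)
  obtain ⟨c, hc, hsurj, hlt⟩ := exists_sorted_enumeration (D.children B) A
    (fun C hC C' hC' h => hunique C hC C' hC' (A C) ⟨le_rfl, hAZ C hC⟩
      ⟨h.ge, h.trans_le (hAZ C' hC')⟩)
  refine ⟨c, fun κ => I (c κ), fun κ => E (c κ), fun κ => A (c κ), fun κ => Z (c κ),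
    fun κ hκ => ⟨hc κ hκ, hch _ (hc κ hκ)⟩, hblock.toIsTimeBlock,
    fun κ hκ => (hch _ (hc κ hκ)).toIsTimeBlock, ?_, ?_, ?_, ?_, ?_⟩
  · intro t h1 h2
    obtain ⟨C, hC, ht⟩ := hcover t h1 h2
    obtain ⟨κ, hκ, rfl⟩ := hsurj C hC
    exact ⟨κ, hκ, hmem' _ hC t ht⟩
  · intro κ hκ
    have h := (hch _ (hc κ hκ)).lt
    have h1 := hsub _ (hc κ hκ) (I (c κ)) le_rfl h
    have h2 := hsub _ (hc κ hκ) (E (c κ) - 1) (by omega) (by omega)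
    exact ⟨h1.1, by omega⟩
  · intro x hx
    obtain ⟨t, h1, h2, rfl⟩ := hblock.exists_key x hx
    obtain ⟨C, hC, ht⟩ := hcover t h1 h2
    obtain ⟨κ, hκ, rfl⟩ := hsurj C hC
    exact ⟨κ, hκ, ((hch _ hC).mem_iff t (h2.trans_le hblock.le)).2 (hmem' _ hC t ht)⟩
  · intro κ hκ
    have h := hAZ _ (hc κ hκ)
    exact ⟨(hkeysub _ (hc κ hκ) _ ⟨le_rfl, h⟩).1, (hkeysub _ (hc κ hκ) _ ⟨h, le_rfl⟩).2⟩
  · intro κ κ' h h'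
    by_contra hle
    have h1 := hlt κ κ' h h'
    have h2 := hunique _ (hc κ (h.trans h')) _ (hc κ' h') (A (c κ')) ⟨h1.le, not_lt.1 hle⟩
      ⟨le_rfl, hAZ _ (hc κ' h')⟩
    rw [h2] at h1
    exact lt_irrefl _ h1

/-- The cost of a node of a decomposition tree is linear in its size, with a factor logarithmic
in the number of children of the nodes. -/
theorem blockCost_le (D : DecompTree X) (hs : IsAccessSeq n X s) {h : ℕ}
    (hD : ∀ B ∈ D.nodes, (D.children B).card ≤ 2 ^ h) {B : Finset Pt} (hB : B ∈ D.nodes)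
    {i e : ℕ} {a b : ℤ} (hblock : IsPointBlock n s B i e a b) :
    blockCost n s (greedyTouch n X) i e + (visible n s (greedyTouch n X) (Set.Icc a b) e).card +
      (4 + 28 * h) ≤ (6 + 28 * h) * (e - i) := by
  induction B using Finset.strongInduction generalizing i e a b with
  | _ B ih =>
    have hie := hblock.lt
    by_cases hcard : B.card = 1
    · have he : e = i + 1 := by
        by_contra hne
        have hmem : ∀ t, i ≤ t → t < e → (s t, (t : ℤ) + 1) ∈ B :=
          fun t h1 h2 => (hblock.mem_iff_time _).2 ⟨t, h1, h2, rfl⟩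
        have := Finset.card_le_one.1 hcard.le _ (hmem i le_rfl hie) _
          (hmem (i + 1) (by omega) (by omega))
        simp at this
      subst he
      have hvis : visible n s (greedyTouch n X) (Set.Icc a b) (i + 1) ⊆ {s i} := by
        intro x hx
        obtain ⟨-, hx, -⟩ := mem_visible.1 hx
        obtain ⟨t, h1, h2, rfl⟩ := hblock.exists_key x hx
        obtain rfl : t = i := by omega
        exact Finset.mem_singleton_self _
      have hvis := card_le_card hvis
      rw [Finset.card_singleton] at hvis
      simp only [blockCost, Finset.Ico_self, Finset.sum_empty, Nat.add_sub_cancel_left]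
      omega
    · obtain ⟨c, st, en, ka, kb, hc, hP⟩ := D.exists_blockPartition hs hB hcard hblock
      have hrec := hs.greedyRun.blockCost_le_sum hP (hD B hB)
      have hsum := Finset.sum_le_sum fun κ (hκ : κ ∈ range (D.children B).card) =>
        have hκ := hc κ (Finset.mem_range.1 hκ)
        ih (c κ) (ssubset_of_mem_children hκ.1) (mem_children.1 hκ.1).1 hκ.2
      have hlen := hP.sum_sum_Ico (fun _ => 1)
      simp only [Finset.sum_const, Nat.card_Ico, smul_eq_mul, mul_one] at hlen
      rw [Finset.sum_add_distrib, Finset.sum_const, Finset.card_range, smul_eq_mul,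
        ← Finset.mul_sum, hlen] at hsum
      have htwo := D.two_le_card_children hB hcard
      have := Nat.mul_le_mul_right (2 + 14 * h) htwo
      linarith

end DecompTree

theorem card_union_greedyG_le {n k : ℕ} {X : Finset Pt} (hn : 1 ≤ n) (hX : IsPermPointSet n X)
    (hk : kDecomposable k X) :
    (X ∪ greedyG n X).card ≤ (6 + 28 * Nat.clog 2 k) * n := by
  obtain ⟨s, hs⟩ := hX.exists_accessSeq
  obtain ⟨D, hD⟩ := hk
  obtain ⟨i, e, a, b, hblock⟩ := (D.isBlock_nodes X D.root_mem).exists_pointBlock hs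
  have hmem : ∀ t < n, i ≤ t ∧ t < e := by
    intro t ht
    obtain ⟨u, h1, h2, h3⟩ := (hblock.mem_iff_time _).1 ((hs.mem_iff _).2 ⟨t, ht, rfl⟩)
    obtain rfl : t = u := by simpa using (Prod.ext_iff.1 h3).2
    exact ⟨h1, h2⟩
  have he := hblock.le
  obtain rfl : i = 0 := by have := hmem 0 hn; omega
  obtain rfl : e = n := by have := hmem (n - 1) (by omega); omega
  have h1 := D.blockCost_le hs
    (fun B hB => (hD B hB).trans (Nat.le_pow_clog one_lt_two k)) D.root_mem hblock
  have h2 := hs.card_le_blockCost hn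
  simp only [Nat.sub_zero] at h1
  omega

/-- There is an absolute constant `C > 0` such that for every `n ≥ 1`, every
integer `k ≥ 2` and every `k`-decomposable permutation point set `X` of size `n`, GREEDY
satisfies `|X ∪ G| ≤ C · n · log₂ k`. -/
theorem greedy_on_decomposable_sequences :
    ∃ C : ℝ, 0 < C ∧ ∀ (n k : ℕ) (X : Finset Pt), 1 ≤ n → 2 ≤ k →
      IsPermPointSet n X → kDecomposable k X →
      (((X ∪ greedyG n X).card : ℝ)) ≤ C * n * Real.logb 2 k := by
  refine ⟨62, by norm_num, fun n k X hn hk hX hdec => ?_⟩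
  have hcard : ((X ∪ greedyG n X).card : ℝ) ≤ (6 + 28 * (Nat.clog 2 k : ℝ)) * n := by
    exact_mod_cast card_union_greedyG_le hn hX hdec
  have hk0 : (0 : ℝ) < k := by positivity
  have hlog : 1 ≤ Real.logb 2 k := by
    rw [Real.le_logb_iff_rpow_le one_lt_two hk0, Real.rpow_one]
    exact_mod_cast hk
  have hclog : (Nat.clog 2 k : ℝ) ≤ Real.logb 2 k + 1 := by
    have hpred : 2 ^ (Nat.clog 2 k - 1) < k :=
      Nat.pow_pred_clog_lt_self one_lt_two (by omega)
    have hpos : 1 ≤ Nat.clog 2 k := Nat.clog_pos one_lt_two hk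
    have hle : ((Nat.clog 2 k - 1 : ℕ) : ℝ) ≤ Real.logb 2 k := by
      rw [Real.le_logb_iff_rpow_le one_lt_two hk0, Real.rpow_natCast]
      exact_mod_cast hpred.le
    rw [Nat.cast_sub hpos, Nat.cast_one] at hle
    linarith
  calc ((X ∪ greedyG n X).card : ℝ) ≤ (6 + 28 * (Nat.clog 2 k : ℝ)) * n := hcard
    _ ≤ (62 * Real.logb 2 k) * n := by
      gcongr
      linarith
    _ = 62 * n * Real.logb 2 k := by ring
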